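/- arXiv:2209.01748 — 5 statements merged into one kernel-verified Lean document; each statement's English description precedes it below -/
import Mathlib

section
/- Let G be a finite simple graph on 6 vertices with minimum degree at least 3 and with degree sum equal to 24 (= 6·6 − 12). Then G has an edge of density at most 16, i.e. there are adjacent vertices u, v with deg(u)·deg(v) ≤ 16. -/
/-!
Let the average degree be at most `d`. If every vertex has degree at least `d`, the graph is
`d`-regular and each edge has density `d ^ 2`. Otherwise some vertex has degree at most `d - 1`;
if it has a neighbor, of degree at most `d + 1`, the edge joining them has density at most
`(d - 1) * (d + 1) < d ^ 2`. On `d + 2` vertices all degrees are at most `d + 1`, and an isolated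
vertex pushes them all down to `d`.
-/

theorem mul_le_sq_of_lt_of_le_succ {a b d : ℕ} (ha : a < d) (hb : b ≤ d + 1) : a * b ≤ d ^ 2 := by
  obtain ⟨k, rfl⟩ := Nat.exists_eq_add_one_of_ne_zero (Nat.ne_zero_of_lt ha)
  calc
    a * b ≤ k * (k + 2) := Nat.mul_le_mul (Nat.le_of_lt_succ ha) hb
    _ ≤ (k + 1) ^ 2 := by linarith

section

variable {V : Type*} [Fintype V] {G : SimpleGraph V} [DecidableRel G.Adj] {d : ℕ}

theorem isRegularOfDegree_of_sum_degree_le (hsum : ∑ v, G.degree v ≤ Fintype.card V * d)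
    (hdeg : ∀ v, d ≤ G.degree v) : G.IsRegularOfDegree d := by
  have hle : ∀ v ∈ Finset.univ, d ≤ G.degree v := fun v _ ↦ hdeg v
  have hsum_eq : ∑ _v : V, d = ∑ v, G.degree v :=
    (Finset.sum_le_sum hle).antisymm (by simpa using hsum)
  exact fun v ↦ ((Finset.sum_eq_sum_iff_of_le hle).1 hsum_eq v (Finset.mem_univ v)).symm

theorem maxDegree_le_card_sub_two_of_isIsolated {u : V} (hu : G.IsIsolated u) :
    G.maxDegree ≤ Fintype.card V - 2 := by
  refine G.maxDegree_le_of_forall_degree_le _ fun v ↦ ?_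
  obtain rfl | hvu := eq_or_ne v u
  · simp only [(G.degree_eq_zero v).2 hu, zero_le]
  · have hv : ¬ G.IsUniversal v := fun h ↦ hu v (h hvu).symm
    have := (G.degree_lt_card_sub_one v).2 hv
    lia

theorem exists_adj_degree_mul_degree_le_sq_of_maxDegree_le [Nonempty V]
    (hiso : ∀ v, ¬ G.IsIsolated v) (hmax : G.maxDegree ≤ d + 1)
    (hsum : ∑ v, G.degree v ≤ Fintype.card V * d) :
    ∃ u v, G.Adj u v ∧ G.degree u * G.degree v ≤ d ^ 2 := by
  by_cases! hlow : ∃ u, G.degree u < d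
  · obtain ⟨u, hu⟩ := hlow
    obtain ⟨v, huv⟩ := G.exists_adj_iff_not_isIsolated.2 (hiso u)
    exact ⟨u, v, huv, mul_le_sq_of_lt_of_le_succ hu ((G.degree_le_maxDegree v).trans hmax)⟩
  · have hreg := isRegularOfDegree_of_sum_degree_le hsum hlow
    obtain ⟨u⟩ := ‹Nonempty V›
    obtain ⟨v, huv⟩ := G.exists_adj_iff_not_isIsolated.2 (hiso u)
    exact ⟨u, v, huv, by rw [hreg u, hreg v, sq]⟩

theorem stmt_5_general (hG : G ≠ ⊥) (hcard : Fintype.card V ≤ d + 2)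
    (hsum : ∑ v, G.degree v ≤ Fintype.card V * d) :
    ∃ u v, G.Adj u v ∧ G.degree u * G.degree v ≤ d ^ 2 := by
  obtain ⟨u, v, huv⟩ := SimpleGraph.ne_bot_iff_exists_adj.1 hG
  by_cases! hiso : ∃ w, G.IsIsolated w
  · obtain ⟨w, hw⟩ := hiso
    have hmax : G.maxDegree ≤ d :=
      (maxDegree_le_card_sub_two_of_isIsolated hw).trans (Nat.sub_le_of_le_add hcard)
    have hdeg (x : V) : G.degree x ≤ d := (G.degree_le_maxDegree x).trans hmax
    exact ⟨u, v, huv, sq d ▸ Nat.mul_le_mul (hdeg u) (hdeg v)⟩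
  · have : Nonempty V := ⟨u⟩
    have hmax : G.maxDegree ≤ d + 1 :=
      Nat.le_of_lt_succ (G.maxDegree_lt_card_verts.trans_le hcard)
    exact exists_adj_degree_mul_degree_le_sq_of_maxDegree_le hiso hmax hsum

end

/-- Every finite simple graph on 6 vertices with minimum degree at least 3
and degree sum 24 has an edge of density at most 16. -/
theorem stmt_5 {V : Type*} [Fintype V] [DecidableEq V]
    (G : SimpleGraph V) [DecidableRel G.Adj]
    (hcard : Fintype.card V = 6)
    (hmin : ∀ v : V, 3 ≤ G.degree v)
    (hsum : ∑ v : V, G.degree v = 24) :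
    ∃ u v : V, G.Adj u v ∧ G.degree u * G.degree v ≤ 16 := by
  have hG : G ≠ ⊥ := by rintro rfl; simp at hsum
  exact stmt_5_general (d := 4) hG hcard.le (by rw [hsum, hcard])
end

section
/- Let G be a finite simple graph on 7 vertices with minimum degree at least 3, with degree sum equal to 30 (= 6·7 − 12), and which is K_{3,3}-free. Then G has an edge of density at most 16, i.e. there are adjacent vertices u, v with deg(u)·deg(v) ≤ 16. -/
/-- A graph contains K33 if there are six pairwise distinct vertices
a1, a2, a3, b1, b2, b3 with each ai adjacent to each bj; otherwise it is K33-free. -/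
def HasK33 {V : Type*} (G : SimpleGraph V) : Prop :=
  ∃ a₁ a₂ a₃ b₁ b₂ b₃ : V, ([a₁, a₂, a₃, b₁, b₂, b₃] : List V).Nodup ∧
    ∀ a ∈ ({a₁, a₂, a₃} : Set V), ∀ b ∈ ({b₁, b₂, b₃} : Set V), G.Adj a b

/-!
Suppose that every edge of `G` has density at least `17`. Isolated vertices lie on no edge and may
be deleted, so let `G` have `n ≤ 7` vertices and minimum degree `δ > 0`. As `17 ≤ δ (n - 1) ≤ 6 δ`,
we have `δ ≥ 3`.

If `δ ≤ 3` or `n ≤ 6`, every neighbour of a vertex of minimum degree has degree `n - 1`. These are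
at least three universal vertices, and three of them together with three other vertices form a
`K₃,₃`. Otherwise `n = 7` and `δ ≥ 4`. Vertices of degree `4` are then pairwise nonadjacent, so at
least four vertices have degree at least `5`: the neighbours of a vertex of degree `4`, or all
vertices if there is none. Hence the degree sum is at least `4 · 7 + 4 > 30`.
-/

open Finset SimpleGraph

section CompleteBipartite

variable {V : Type*} {G : SimpleGraph V}

theorem hasK33_iff_completeBipartiteGraph_isContained :
    HasK33 G ↔ completeBipartiteGraph (Fin 3) (Fin 3) ⊑ G := by
  classical
  simp only [completeBipartiteGraph_isContained_iff, Fintype.card_fin]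
  constructor
  · rintro ⟨a₁, a₂, a₃, b₁, b₂, b₃, hnodup, hadj⟩
    simp only [List.nodup_cons, List.mem_cons, List.not_mem_nil, or_false, not_or] at hnodup
    refine ⟨{a₁, a₂, a₃}, {b₁, b₂, b₃}, card_eq_three.2 ?_, card_eq_three.2 ?_, ?_⟩
    · exact ⟨a₁, a₂, a₃, by tauto⟩
    · exact ⟨b₁, b₂, b₃, by tauto⟩
    · simpa [IsCompleteBetween] using hadj
  · rintro ⟨A, B, hA, hB, hAB⟩
    have hdisj := hAB.disjoint
    obtain ⟨a₁, a₂, a₃, ha₁₂, ha₁₃, ha₂₃, rfl⟩ := card_eq_three.1 hA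
    obtain ⟨b₁, b₂, b₃, hb₁₂, hb₁₃, hb₂₃, rfl⟩ := card_eq_three.1 hB
    refine ⟨a₁, a₂, a₃, b₁, b₂, b₃, ?_, by simpa [IsCompleteBetween] using hAB⟩
    simp only [disjoint_coe, disjoint_insert_left, disjoint_singleton_left, mem_insert,
      mem_singleton, not_or] at hdisj
    simp only [List.nodup_cons, List.mem_cons, List.not_mem_nil, List.nodup_nil, or_false, not_or,
      not_false_eq_true, and_true]
    tauto

theorem HasK33.mono {W : Type*} {H : SimpleGraph W} (hGH : G ⊑ H) (hG : HasK33 G) : HasK33 H :=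
  hasK33_iff_completeBipartiteGraph_isContained.2
    ((hasK33_iff_completeBipartiteGraph_isContained.1 hG).trans hGH)

theorem completeBipartiteGraph_isContained_of_isUniversal [Fintype V]
    {α β : Type*} [Fintype α] [Fintype β] {S : Finset V} (hS : ∀ v ∈ S, G.IsUniversal v)
    (hα : Fintype.card α ≤ #S) (hαβ : Fintype.card α + Fintype.card β ≤ Fintype.card V) :
    completeBipartiteGraph α β ⊑ G := by
  classical
  obtain ⟨A, hAS, hA⟩ := exists_subset_card_eq hα
  have hβ : Fintype.card β ≤ #Aᶜ := by
    rw [card_compl]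
    omega
  obtain ⟨B, hBA, hB⟩ := exists_subset_card_eq hβ
  refine completeBipartiteGraph_isContained_iff.2 ⟨A, B, hA, hB, fun a ha b hb ↦ ?_⟩
  refine hS a (hAS ha) ?_
  rintro rfl
  exact mem_compl.1 (hBA hb) ha

end CompleteBipartite

section Degree

variable {V : Type*} [Fintype V] {G : SimpleGraph V} [DecidableRel G.Adj]

theorem le_card_filter_lt_degree [Nonempty V] {k : ℕ} (hk : k ≤ G.minDegree)
    (hindep : G.IsIndepSet {v | G.degree v = k}) : k ≤ #{v | k < G.degree v} := by
  have hkdeg (v : V) : k ≤ G.degree v := hk.trans (G.minDegree_le_degree v)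
  by_cases! hv : ∃ v, G.degree v = k
  · obtain ⟨v, hv⟩ := hv
    rw [← hv, ← card_neighborFinset_eq_degree]
    refine card_le_card fun u hu ↦ ?_
    have hvu : G.Adj v u := (G.mem_neighborFinset v u).1 hu
    simp only [mem_filter, mem_univ, true_and, card_neighborFinset_eq_degree, hv]
    exact (hkdeg u).lt_of_ne' fun huk ↦ hindep hv huk hvu.ne hvu
  · rw [filter_true_of_mem fun v _ ↦ (hkdeg v).lt_of_ne' (hv v), card_univ]
    exact hk.trans G.minDegree_lt_card.le

theorem mul_card_add_one_le_sum_degrees [Nonempty V] {k : ℕ} (hk : k ≤ G.minDegree)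
    (hindep : G.IsIndepSet {v | G.degree v = k}) :
    k * (Fintype.card V + 1) ≤ ∑ v, G.degree v := by
  calc
    k * (Fintype.card V + 1) = Fintype.card V * k + k := by ring
    _ ≤ Fintype.card V * k + #{v | k < G.degree v} := by
      gcongr
      exact le_card_filter_lt_degree hk hindep
    _ = ∑ v, (k + if k < G.degree v then 1 else 0) := by
      rw [sum_add_distrib, sum_const, card_univ, smul_eq_mul, card_filter]
    _ ≤ ∑ v, G.degree v := by
      refine sum_le_sum fun v _ ↦ ?_
      have hkv : k ≤ G.degree v := hk.trans (G.minDegree_le_degree v)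
      split_ifs <;> omega

theorem minDegree_induce_support_pos (hG : G ≠ ⊥) :
    0 < (G.induce G.support).minDegree := by
  have : Nonempty G.support :=
    (Set.nonempty_iff_ne_empty.2 (mt G.support_eq_bot_iff.1 hG)).to_subtype
  refine le_minDegree_of_forall_le_degree _ 1 fun v ↦ ?_
  rw [degree_induce_support]
  exact (G.degree_pos_iff_mem_support v).2 v.2

end Degree

section Density

variable {V : Type*} [Fintype V] {G : SimpleGraph V} [DecidableRel G.Adj]

theorem isIndepSet_degree_eq_of_lt_degree_mul_degree {k : ℕ}
    (hdense : ∀ u v, G.Adj u v → k ^ 2 < G.degree u * G.degree v) :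
    G.IsIndepSet {v | G.degree v = k} := by
  intro u hu v hv _ huv
  have huv_dense := hdense u v huv
  rw [show G.degree u = k from hu, show G.degree v = k from hv, sq] at huv_dense
  exact huv_dense.false

theorem isUniversal_of_lt_minDegree_mul_degree {u v : V} (hcard : Fintype.card V ≤ 7)
    (hsmall : Fintype.card V ≤ 6 ∨ G.minDegree ≤ 3) (hv : G.degree v = G.minDegree)
    (hdense : 16 < G.degree v * G.degree u) : G.IsUniversal u := by
  rw [← G.degree_eq_card_sub_one]
  have hu_lt : G.degree u < Fintype.card V := G.degree_lt_card_verts u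
  suffices Fintype.card V ≤ G.degree u + 1 by omega
  have hvu : G.degree v ≤ G.degree u := hv ▸ G.minDegree_le_degree u
  by_contra! hlt
  rcases hsmall with hsix | hthree
  · have : G.degree v * G.degree u ≤ 4 * 4 := Nat.mul_le_mul (by omega) (by omega)
    omega
  · have : G.degree v * G.degree u ≤ 3 * 5 := Nat.mul_le_mul (by omega) (by omega)
    omega

theorem hasK33_of_lt_degree_mul_degree (hcard : Fintype.card V ≤ 7) (hpos : 0 < G.minDegree)
    (hsmall : Fintype.card V ≤ 6 ∨ G.minDegree ≤ 3)
    (hdense : ∀ u v, G.Adj u v → 16 < G.degree u * G.degree v) : HasK33 G := by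
  have : Nonempty V := by
    by_contra! hempty
    exact hpos.ne' (minDegree_of_subsingleton G)
  obtain ⟨v, hv⟩ := G.exists_minimal_degree_vertex
  have huniv : ∀ u ∈ G.neighborFinset v, G.IsUniversal u := fun u hu ↦
    isUniversal_of_lt_minDegree_mul_degree hcard hsmall hv.symm
      (hdense v u ((G.mem_neighborFinset v u).1 hu))
  obtain ⟨u, hvu⟩ := (G.degree_pos_iff_exists_adj v).1 (hv ▸ hpos)
  have hdense_vu := hdense v u hvu
  have hu_lt : G.degree u < Fintype.card V := G.degree_lt_card_verts u
  have hvu_le : G.degree v ≤ G.degree u := hv ▸ G.minDegree_le_degree u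
  have hthree : 3 ≤ G.degree v := by
    by_contra! hlt
    have : G.degree v * G.degree u ≤ 2 * 6 := Nat.mul_le_mul (by omega) (by omega)
    omega
  have hsix : 6 ≤ Fintype.card V := by
    by_contra! hlt
    have : G.degree v * G.degree u ≤ 4 * 4 := Nat.mul_le_mul (by omega) (by omega)
    omega
  refine hasK33_iff_completeBipartiteGraph_isContained.2
    (completeBipartiteGraph_isContained_of_isUniversal huniv ?_ ?_)
  · rwa [Fintype.card_fin, card_neighborFinset_eq_degree]
  · rwa [Fintype.card_fin]

theorem exists_adj_degree_mul_degree_le_of_minDegree_pos (hcard : Fintype.card V ≤ 7)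
    (hpos : 0 < G.minDegree) (hedges : #G.edgeFinset ≤ 15) (hK33 : ¬ HasK33 G) :
    ∃ u v : V, G.Adj u v ∧ G.degree u * G.degree v ≤ 16 := by
  by_contra! hdense
  have hlarge : ¬ (Fintype.card V ≤ 6 ∨ G.minDegree ≤ 3) := fun hsmall ↦
    hK33 (hasK33_of_lt_degree_mul_degree hcard hpos hsmall hdense)
  obtain ⟨hseven, hfour⟩ : Fintype.card V = 7 ∧ 4 ≤ G.minDegree := by omega
  have : Nonempty V := Fintype.card_pos_iff.1 (by omega)
  have hsum := mul_card_add_one_le_sum_degrees hfour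
    (isIndepSet_degree_eq_of_lt_degree_mul_degree hdense)
  rw [sum_degrees_eq_twice_card_edges, hseven] at hsum
  omega

end Density

theorem stmt_6_general {V : Type*} [Fintype V] (G : SimpleGraph V) [DecidableRel G.Adj]
    (hcard : Fintype.card V ≤ 7) (hne : G ≠ ⊥) (hedges : #G.edgeFinset ≤ 15)
    (hK33 : ¬ HasK33 G) :
    ∃ u v : V, G.Adj u v ∧ G.degree u * G.degree v ≤ 16 := by
  obtain ⟨u, v, huv, hdensity⟩ := exists_adj_degree_mul_degree_le_of_minDegree_pos
    ((Fintype.card_subtype_le _).trans hcard) (minDegree_induce_support_pos hne)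
    (G.card_edgeFinset_induce_support.trans_le hedges)
    fun h ↦ hK33 (h.mono ⟨.induce G G.support⟩)
  simp only [degree_induce_support] at hdensity
  exact ⟨u, v, huv, hdensity⟩

/-- Every finite simple K33-free graph on 7 vertices with minimum degree at
least 3 and degree sum 30 has an edge of density at most 16. -/
theorem stmt_6 {V : Type*} [Fintype V] [DecidableEq V]
    (G : SimpleGraph V) [DecidableRel G.Adj]
    (hcard : Fintype.card V = 7)
    (hmin : ∀ v : V, 3 ≤ G.degree v)
    (hsum : ∑ v : V, G.degree v = 30)
    (hK33 : ¬ HasK33 G) :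
    ∃ u v : V, G.Adj u v ∧ G.degree u * G.degree v ≤ 16 := by
  rw [sum_degrees_eq_twice_card_edges] at hsum
  exact stmt_6_general G hcard.le (edgeFinset_nonempty.1 (card_pos.1 (by omega))) (by omega) hK33
end

section
/- Let G be a finite simple graph on 8 vertices with minimum degree at least 3, with degree sum equal to 36 (= 6·8 − 12), and which is K_{3,3}-free. Then G has an edge of density at most 18, i.e. there are adjacent vertices u, v with deg(u)·deg(v) ≤ 18. -/
/-!
Let `G` have `n ≥ 8` vertices and suppose that every edge has density above `3 (n - 2)`. A vertex
of degree `1` or `2` would lie on an edge of density at most `2 (n - 1)`, and the neighbors of a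
vertex of degree `3` would all have degree `n - 1`, so they would form a `K_{3,3}` with the other
vertices. Hence all degrees are at least `4`. Since the degree sum is at most `4 n + 4`, at least
`n - 4` vertices have degree exactly `4`. As `4 * 4 ≤ 3 (n - 2)`, these form an independent set `I`,
so each of them is joined to all of the at most four vertices outside `I`: again a `K_{3,3}`.
-/

open Finset

section CompleteBetween

variable {V : Type*} {G : SimpleGraph V}

theorem isCompleteBetween_compl_of_isUniversal {s : Set V} (hs : ∀ v ∈ s, G.IsUniversal v) :
    G.IsCompleteBetween s sᶜ :=
  fun v hv _ hw => hs v hv (ne_of_mem_of_not_mem hv hw)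

theorem HasK33.of_isCompleteBetween {s t : Finset V} (hs : 3 ≤ #s) (ht : 3 ≤ #t)
    (hst : G.IsCompleteBetween s t) : HasK33 G := by
  obtain ⟨a₁, a₂, a₃, ha₁, ha₂, ha₃, ha₁₂, ha₁₃, ha₂₃⟩ := two_lt_card_iff.mp hs
  obtain ⟨b₁, b₂, b₃, hb₁, hb₂, hb₃, hb₁₂, hb₁₃, hb₂₃⟩ := two_lt_card_iff.mp ht
  have ne_of_mem {a b : V} (ha : a ∈ s) (hb : b ∈ t) : a ≠ b := (hst ha hb).ne
  refine ⟨a₁, a₂, a₃, b₁, b₂, b₃, ?_, ?_⟩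
  · simp [*]
  · rintro a (rfl | rfl | rfl) b (rfl | rfl | rfl) <;> exact hst ‹_› ‹_›

variable [Fintype V]

theorem HasK33.of_isCompleteBetween_compl {s : Finset V} (hs : 3 ≤ #s)
    (hs_compl : #s + 3 ≤ Fintype.card V) (h : G.IsCompleteBetween s (s : Set V)ᶜ) : HasK33 G := by
  classical
  have three_le_card_compl : 3 ≤ #sᶜ := by
    rw [card_compl]
    lia
  exact of_isCompleteBetween hs three_le_card_compl (by rwa [coe_compl])

end CompleteBetween

section IsIndepSet

variable {V : Type*} [Fintype V] {G : SimpleGraph V} [DecidableRel G.Adj] {s : Finset V} {v : V}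

theorem neighborFinset_subset_compl_of_isIndepSet [DecidableEq V] (hs : G.IsIndepSet s)
    (hv : v ∈ s) : G.neighborFinset v ⊆ sᶜ := by
  intro w hw
  rw [SimpleGraph.mem_neighborFinset] at hw
  exact mem_compl.mpr fun hws => hs hv hws hw.ne hw

theorem card_add_degree_le_of_isIndepSet (hs : G.IsIndepSet s) (hv : v ∈ s) :
    #s + G.degree v ≤ Fintype.card V := by
  classical
  calc #s + G.degree v ≤ #s + #sᶜ := by
        gcongr
        exact card_le_card (neighborFinset_subset_compl_of_isIndepSet hs hv)
    _ = Fintype.card V := card_add_card_compl s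

theorem neighborFinset_eq_compl_of_isIndepSet [DecidableEq V] (hs : G.IsIndepSet s) (hv : v ∈ s)
    (hcard : Fintype.card V ≤ #s + G.degree v) : G.neighborFinset v = sᶜ := by
  refine eq_of_subset_of_card_le (neighborFinset_subset_compl_of_isIndepSet hs hv) ?_
  rw [card_compl, SimpleGraph.card_neighborFinset_eq_degree]
  lia

theorem isCompleteBetween_compl_of_isIndepSet (hs : G.IsIndepSet s)
    (hcard : ∀ v ∈ s, Fintype.card V ≤ #s + G.degree v) :
    G.IsCompleteBetween s (s : Set V)ᶜ := by
  classical
  intro v hv w hw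
  rw [← SimpleGraph.mem_neighborFinset, neighborFinset_eq_compl_of_isIndepSet hs hv (hcard v hv)]
  simpa using hw

theorem HasK33.of_isIndepSet (hs : G.IsIndepSet s) (three_le_card : 3 ≤ #s)
    (three_le_degree : ∀ v ∈ s, 3 ≤ G.degree v)
    (hcard : ∀ v ∈ s, Fintype.card V ≤ #s + G.degree v) : HasK33 G := by
  obtain ⟨v, hv⟩ : s.Nonempty := card_pos.mp (by lia)
  have hs_compl : #s + 3 ≤ Fintype.card V :=
    (Nat.add_le_add_left (three_le_degree v hv) _).trans (card_add_degree_le_of_isIndepSet hs hv)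
  exact of_isCompleteBetween_compl three_le_card hs_compl
    (isCompleteBetween_compl_of_isIndepSet hs hcard)

end IsIndepSet

section Degree

variable {V : Type*} [Fintype V] {G : SimpleGraph V} [DecidableRel G.Adj] {v : V}

theorem isIndepSet_filter_degree_eq {d D : ℕ} (hd : d * d ≤ D)
    (hdensity : ∀ u v, G.Adj u v → D < G.degree u * G.degree v) :
    G.IsIndepSet ({v | G.degree v = d} : Finset V) := by
  intro u hu v hv _ huv
  have degree_u : G.degree u = d := (mem_filter.mp hu).2
  have degree_v : G.degree v = d := (mem_filter.mp hv).2
  have := hdensity u v huv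
  rw [degree_u, degree_v] at this
  lia

theorem three_le_degree_of_density_gt (hn : 4 ≤ Fintype.card V) (hpos : 0 < G.degree v)
    (hdensity : ∀ u, G.Adj v u → 3 * (Fintype.card V - 2) < G.degree v * G.degree u) :
    3 ≤ G.degree v := by
  obtain ⟨u, hvu⟩ := (G.degree_pos_iff_exists_adj v).mp hpos
  by_contra! degree_lt
  have : G.degree v * G.degree u ≤ 2 * (Fintype.card V - 1) :=
    Nat.mul_le_mul (by lia) (Nat.le_sub_one_of_lt (G.degree_lt_card_verts u))
  have := hdensity u hvu
  lia

theorem HasK33.of_degree_eq_three (hn : 6 ≤ Fintype.card V) (hv : G.degree v = 3)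
    (hdensity : ∀ u, G.Adj v u → 3 * (Fintype.card V - 2) < G.degree v * G.degree u) :
    HasK33 G := by
  have isUniversal_of_adj : ∀ u ∈ (G.neighborFinset v : Set V), G.IsUniversal u := by
    intro u hu
    have := hdensity u (by simpa using hu)
    have := G.degree_lt_card_verts u
    rw [← G.degree_eq_card_sub_one]
    lia
  exact of_isCompleteBetween_compl hv.ge (by rw [G.card_neighborFinset_eq_degree]; lia)
    (isCompleteBetween_compl_of_isUniversal isUniversal_of_adj)

theorem four_le_degree_of_density_gt (hn : 6 ≤ Fintype.card V) (hK33 : ¬ HasK33 G)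
    (hpos : 0 < G.degree v)
    (hdensity : ∀ u, G.Adj v u → 3 * (Fintype.card V - 2) < G.degree v * G.degree u) :
    4 ≤ G.degree v := by
  have degree_ne_three : G.degree v ≠ 3 := fun hv => hK33 (.of_degree_eq_three hn hv hdensity)
  have := three_le_degree_of_density_gt (by lia) hpos hdensity
  lia

end Degree

theorem card_mul_succ_le_sum_add_card_filter_eq {ι : Type*} {s : Finset ι} {f : ι → ℕ} {d : ℕ}
    (hf : ∀ i ∈ s, d ≤ f i) : #s * (d + 1) ≤ ∑ i ∈ s, f i + #{i ∈ s | f i = d} := by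
  rw [card_filter, ← sum_add_distrib]
  refine card_nsmul_le_sum s _ (d + 1) fun i hi => ?_
  have := hf i hi
  split_ifs <;> lia

theorem stmt_7_general {V : Type*} [Fintype V] (G : SimpleGraph V) [DecidableRel G.Adj]
    (hcard : 8 ≤ Fintype.card V) (hpos : ∀ v : V, 0 < G.degree v)
    (hsum : ∑ v : V, G.degree v ≤ 4 * Fintype.card V + 4) (hK33 : ¬ HasK33 G) :
    ∃ u v : V, G.Adj u v ∧ G.degree u * G.degree v ≤ 3 * (Fintype.card V - 2) := by
  by_contra! hdensity
  have four_le_degree (v : V) : 4 ≤ G.degree v :=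
    four_le_degree_of_density_gt (by lia) hK33 (hpos v) (hdensity v)
  let I : Finset V := {v | G.degree v = 4}
  have degree_eq_four : ∀ v ∈ I, G.degree v = 4 := fun v hv => (mem_filter.mp hv).2
  have isIndepSet_I : G.IsIndepSet I := isIndepSet_filter_degree_eq (by lia) hdensity
  have card_le_card_I_add_four : Fintype.card V ≤ #I + 4 := by
    have : Fintype.card V * 5 ≤ ∑ v, G.degree v + #I :=
      card_mul_succ_le_sum_add_card_filter_eq fun v _ => four_le_degree v
    lia
  exact hK33 <| .of_isIndepSet isIndepSet_I (by lia)
    (fun v hv => by rw [degree_eq_four v hv]; lia)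
    (fun v hv => by rwa [degree_eq_four v hv])

/-- Every finite simple K33-free graph on 8 vertices with minimum degree at
least 3 and degree sum 36 has an edge of density at most 18. -/
theorem stmt_7 {V : Type*} [Fintype V] [DecidableEq V]
    (G : SimpleGraph V) [DecidableRel G.Adj]
    (hcard : Fintype.card V = 8)
    (hmin : ∀ v : V, 3 ≤ G.degree v)
    (hsum : ∑ v : V, G.degree v = 36)
    (hK33 : ¬ HasK33 G) :
    ∃ u v : V, G.Adj u v ∧ G.degree u * G.degree v ≤ 18 := by
  simpa [hcard] using
    stmt_7_general G hcard.ge (fun v => Nat.zero_lt_of_lt (hmin v)) (by lia) hK33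
end

section
/- Let G be a finite simple graph on 10 vertices with minimum degree at least 4, with degree sum equal to 48 (= 6·10 − 12), and which is K_{3,3}-free. Then G has an edge of density at most 20, i.e. there are adjacent vertices u, v with deg(u)·deg(v) ≤ 20. -/
/-!
Let `d` be a lower bound for the degrees, `A` the set of vertices of degree `d` and `B` the set of
vertices of degree greater than `d + k`, and suppose that no edge joins `A` to the complement of
`B`. A degree sum below `(d + 1) * |V|` makes `A` nonempty, so `B` contains the `d` neighbors of a
vertex of `A`. A degree sum below `d * |V| + (k + 1) * (d + 1)` leaves no room for more, so `B` is
the neighborhood of every vertex of `A`. The degrees in `B` exceed `d + 1` by at least `k`, and only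
vertices of `A`, each by one unit, bring the average back below `d + 1`. Hence `A` has more than
`d * k` elements, which yields a `K_{d * k + 1, d}`.

With `d = 4` and `k = 1`, the two bounds on the degree sum are `50` for graphs on 10 vertices, and
the subgraph is a `K_{5,4}`.
-/

section DegreeSum

open Finset

variable {ι : Type*} {s : Finset ι} {f : ι → ℕ} {d : ℕ}

lemma mul_card_add_mul_card_filter_le_sum (hf : ∀ i ∈ s, d ≤ f i) (k : ℕ) :
    d * #s + k * #{i ∈ s | d + k ≤ f i} ≤ ∑ i ∈ s, f i :=
  calc
    d * #s + k * #{i ∈ s | d + k ≤ f i} = ∑ i ∈ s, (d + if d + k ≤ f i then k else 0) := by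
      simp [sum_add_distrib, ← sum_filter, mul_comm]
    _ ≤ ∑ i ∈ s, f i := sum_le_sum fun i hi ↦ by
      have := hf i hi
      split_ifs <;> omega

lemma succ_mul_card_add_mul_card_filter_le_sum_add_card_filter_eq
    (hf : ∀ i ∈ s, d ≤ f i) (k : ℕ) :
    (d + 1) * #s + k * #{i ∈ s | d + 1 + k ≤ f i} ≤ ∑ i ∈ s, f i + #{i ∈ s | f i = d} := by
  -- Raising the value `d` to `d + 1` costs one unit for each index where it is attained.
  let g i := f i + if f i = d then 1 else 0
  have hg : ∀ i ∈ s, d + 1 ≤ g i := fun i hi ↦ by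
    have := hf i hi
    dsimp only [g]
    split_ifs <;> omega
  calc
    _ ≤ (d + 1) * #s + k * #{i ∈ s | d + 1 + k ≤ g i} := by
      gcongr with i
      exact Nat.le_add_right _ _
    _ ≤ ∑ i ∈ s, g i := mul_card_add_mul_card_filter_le_sum hg k
    _ = _ := by rw [sum_add_distrib, card_filter]

end DegreeSum

section CompleteBipartite

open Finset SimpleGraph

variable {V : Type*} {G : SimpleGraph V}

lemma completeBipartiteGraph_isContained_of_isCompleteBetween {α β : Type*} [Fintype α] [Fintype β]
    {s t : Finset V} (hs : Fintype.card α ≤ #s) (ht : Fintype.card β ≤ #t)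
    (hst : G.IsCompleteBetween s t) : completeBipartiteGraph α β ⊑ G := by
  obtain ⟨left, hleft, hleft_card⟩ := exists_subset_card_eq hs
  obtain ⟨right, hright, hright_card⟩ := exists_subset_card_eq ht
  exact completeBipartiteGraph_isContained_iff.mpr ⟨left, right, hleft_card, hright_card,
    fun _ ha _ hb ↦ hst (hleft ha) (hright hb)⟩

lemma hasK33_of_completeBipartiteGraph_isContained {α β : Type*} [Fintype α] [Fintype β]
    (hα : 2 < Fintype.card α) (hβ : 2 < Fintype.card β) (h : completeBipartiteGraph α β ⊑ G) :
    HasK33 G := by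
  obtain ⟨φ⟩ := h
  obtain ⟨a₁, a₂, a₃, ha₁₂, ha₁₃, ha₂₃⟩ := Fintype.two_lt_card_iff.mp hα
  obtain ⟨b₁, b₂, b₃, hb₁₂, hb₁₃, hb₂₃⟩ := Fintype.two_lt_card_iff.mp hβ
  have hadj (a : α) (b : β) : G.Adj (φ (.inl a)) (φ (.inr b)) := φ.toHom.map_adj (by simp)
  refine ⟨φ (.inl a₁), φ (.inl a₂), φ (.inl a₃), φ (.inr b₁), φ (.inr b₂), φ (.inr b₃), ?_, ?_⟩
  · have hnodup : [Sum.inl a₁, .inl a₂, .inl a₃, .inr b₁, .inr b₂, .inr b₃].Nodup := by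
      simp [*]
    exact hnodup.map φ.injective
  · rintro _ (rfl | rfl | rfl) _ (rfl | rfl | rfl) <;> exact hadj _ _

lemma isCompleteBetween_of_neighborFinset_subset [G.LocallyFinite] {A B : Finset V}
    (hsub : ∀ a ∈ A, G.neighborFinset a ⊆ B) (hcard : ∀ a ∈ A, #B ≤ G.degree a) :
    G.IsCompleteBetween A B := by
  intro a ha b hb
  have hnbhd : G.neighborFinset a = B := eq_of_subset_of_card_le (hsub a ha) (hcard a ha)
  exact (G.mem_neighborFinset a b).mp (hnbhd ▸ hb)

end CompleteBipartite

open Finset SimpleGraph in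
theorem stmt_9_general {V : Type*} [Fintype V] (G : SimpleGraph V) [DecidableRel G.Adj] {d k : ℕ}
    (hmin : ∀ v, d ≤ G.degree v)
    (hsum : ∑ v, G.degree v < (d + 1) * Fintype.card V)
    (hsum' : ∑ v, G.degree v < d * Fintype.card V + (k + 1) * (d + 1))
    (hfree : (completeBipartiteGraph (Fin (d * k + 1)) (Fin d)).Free G) :
    ∃ u v, G.Adj u v ∧ G.degree u = d ∧ G.degree v ≤ d + k := by
  by_contra! hheavy
  let A : Finset V := {v | G.degree v = d}
  let B : Finset V := {v | d + (k + 1) ≤ G.degree v}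
  have hdeg : ∀ a ∈ A, G.degree a = d := fun a ha ↦ (mem_filter.mp ha).2
  have hsub : ∀ a ∈ A, G.neighborFinset a ⊆ B := fun a ha b hb ↦
    mem_filter.mpr ⟨mem_univ b, hheavy a b ((G.mem_neighborFinset a b).mp hb) (hdeg a ha)⟩
  have hB_sum : d * Fintype.card V + (k + 1) * #B ≤ ∑ v, G.degree v :=
    mul_card_add_mul_card_filter_le_sum (fun v _ ↦ hmin v) (k + 1)
  have hA_sum : (d + 1) * Fintype.card V + k * #B ≤ ∑ v, G.degree v + #A := by
    simpa only [A, B, card_univ, add_assoc, add_comm 1 k] using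
      succ_mul_card_add_mul_card_filter_le_sum_add_card_filter_eq (s := univ)
        (fun v _ ↦ hmin v) k
  have hB_le : #B ≤ d :=
    Nat.lt_succ_iff.mp <| lt_of_mul_lt_mul_left (by omega : (k + 1) * #B < (k + 1) * (d + 1)) <|
      Nat.zero_le _
  obtain ⟨a, ha⟩ : A.Nonempty := card_pos.mp (by omega)
  have hB_ge : d ≤ #B := hdeg a ha ▸ card_le_card (hsub a ha)
  have hA_gt : d * k + 1 ≤ #A := by
    have hmul : d * k ≤ k * #B := mul_comm d k ▸ Nat.mul_le_mul_left k hB_ge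
    omega
  exact hfree <| completeBipartiteGraph_isContained_of_isCompleteBetween (by simpa) (by simpa) <|
    isCompleteBetween_of_neighborFinset_subset hsub fun a ha ↦ (hdeg a ha).symm ▸ hB_le

/-- Every finite simple K33-free graph on 10 vertices with minimum degree at
least 4 and degree sum 48 has an edge of density at most 20. -/
theorem stmt_9 {V : Type*} [Fintype V] [DecidableEq V]
    (G : SimpleGraph V) [DecidableRel G.Adj]
    (hcard : Fintype.card V = 10)
    (hmin : ∀ v : V, 4 ≤ G.degree v)
    (hsum : ∑ v : V, G.degree v = 48)
    (hK33 : ¬ HasK33 G) :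
    ∃ u v : V, G.Adj u v ∧ G.degree u * G.degree v ≤ 20 := by
  obtain ⟨u, v, huv, hu, hv⟩ := stmt_9_general (k := 1) G hmin (by omega) (by omega) fun h ↦
    hK33 (hasK33_of_completeBipartiteGraph_isContained (by simp) (by simp) h)
  exact ⟨u, v, huv, Nat.mul_le_mul hu.le hv⟩
end

section
/- Let Γ be a subgroup of SL(2,ℝ) containing the parabolic matrix [[1, m₁],[0, 1]] and a matrix [[a, b],[m₂, d]] of determinant 1 with a + d = 2, and suppose D := m₁·m₂ > 4. Then Γ contains a hyperbolic element γ (with |tr(γ)| = D − 2) whose translation length ℓ = inf_{z ∈ ℍ} dist(z, γ·z) satisfies cosh(ℓ/2) = (D − 2)/2; equivalently, ℓ = 2·arccosh((D − 2)/2). -/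
open Matrix

/-- The inverse hyperbolic cosine on [1, ∞): arccosh x = log (x + sqrt (x² - 1)). -/
noncomputable def arccosh (x : ℝ) : ℝ := Real.log (x + Real.sqrt (x ^ 2 - 1))

/-!
For `g = !![p, q; r, s]` in `SL(2, ℝ)`, the numerator of `conj z - g • z` is
`conj z * (r * z + s) - (p * z + q)`, with real part
`Q(z) = r * |z| ^ 2 + (s - p) * re z - q` and imaginary part `-(tr g) * im z`. Hence
`cosh (dist z (g • z) / 2) ^ 2 = (tr g / 2) ^ 2 + (Q(z) / (2 * im z)) ^ 2`, so that
`cosh (dist z (g • z) / 2) ≥ |tr g| / 2`, with equality exactly on the curve `Q(z) = 0`. When `g`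
is hyperbolic this curve, the axis of `g`, meets the upper half-plane and the bound is attained.
For `A = !![1, m; 0, 1]` one has `tr (A⁻¹ * B) = tr B - m * B 1 0`.
-/

section Displacement

open UpperHalfPlane
open scoped MatrixGroups ComplexConjugate

variable (g : SL(2, ℝ)) (z : ℍ)

/-- The real quadratic function whose zero locus in `ℍ` is the axis of `g` when `g` is hyperbolic:
the real part of `conj z * (g 1 0 * z + g 1 1) - (g 0 0 * z + g 0 1)`. -/
def axisForm : ℝ :=
  g 1 0 * (z.re ^ 2 + z.im ^ 2) + (g 1 1 - g 0 0) * z.re - g 0 1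

lemma conj_mul_denom_sub_num :
    conj (z : ℂ) * denom g z - num g z = ⟨axisForm g z, -(g.val.trace * z.im)⟩ := by
  apply Complex.ext <;> simp [axisForm, num, denom, trace_fin_two] <;> ring

lemma sqrt_im_mul_im_smul : √(z.im * (g • z).im) = z.im / ‖denom g z‖ := by
  have him : (g • z).im = z.im / ‖denom g z‖ ^ 2 := by
    simpa [Complex.normSq_eq_norm_sq, ← ModularGroup.sl_moeb] using!
      im_smul_eq_div_normSq (g : GL (Fin 2) ℝ) z
  rw [him, ← mul_div_assoc, ← sq, ← div_pow, Real.sqrt_sq (by positivity)]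

lemma dist_conj_smul :
    dist (z : ℂ) (conj ((g • z : ℍ) : ℂ)) =
      ‖conj (z : ℂ) * denom g z - num g z‖ / ‖denom g z‖ := by
  have hdenom : denom g z ≠ 0 := denom_ne_zero g z
  have hsmul : ((g • z : ℍ) : ℂ) = num g z / denom g z := coe_specialLinearGroup_apply g z
  rw [← Complex.dist_conj_comm, hsmul, Complex.dist_eq, ← norm_div, sub_div,
    mul_div_cancel_right₀ _ hdenom]

theorem cosh_half_dist_smul :
    Real.cosh (dist z (g • z) / 2) =
      ‖(⟨axisForm g z, -(g.val.trace * z.im)⟩ : ℂ)‖ / (2 * z.im) := by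
  have hdenom : ‖denom g z‖ ≠ 0 := norm_ne_zero_iff.2 (denom_ne_zero g z)
  rw [cosh_half_dist, dist_conj_smul, sqrt_im_mul_im_smul, conj_mul_denom_sub_num]
  field_simp

theorem cosh_half_dist_smul_sq :
    Real.cosh (dist z (g • z) / 2) ^ 2 =
      (g.val.trace / 2) ^ 2 + (axisForm g z / (2 * z.im)) ^ 2 := by
  have := z.im_ne_zero
  rw [cosh_half_dist_smul, div_pow, Complex.sq_norm, Complex.normSq_mk]
  field_simp
  ring

lemma abs_trace_div_two_le_cosh_half_dist_smul :
    |g.val.trace| / 2 ≤ Real.cosh (dist z (g • z) / 2) := by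
  refine le_of_sq_le_sq ?_ (Real.cosh_pos _).le
  rw [cosh_half_dist_smul_sq, div_pow, sq_abs, ← div_pow]
  exact le_add_of_nonneg_right (sq_nonneg _)

variable {g z}

lemma cosh_half_dist_smul_of_axisForm_eq_zero (hz : axisForm g z = 0) :
    Real.cosh (dist z (g • z) / 2) = |g.val.trace| / 2 := by
  rw [← sq_eq_sq₀ (Real.cosh_pos _).le (by positivity), cosh_half_dist_smul_sq, hz, div_pow |_|,
    sq_abs]
  ring

lemma exists_axisForm_eq_zero_of_apply_one_zero_eq_zero (hr : g 1 0 = 0)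
    (hdiag : g 0 0 ≠ g 1 1) : ∃ z : ℍ, axisForm g z = 0 := by
  refine ⟨⟨⟨g 0 1 / (g 1 1 - g 0 0), 1⟩, one_pos⟩, ?_⟩
  simp [axisForm, hr, UpperHalfPlane.re, mul_div_cancel₀ _ (sub_ne_zero.2 hdiag.symm)]

lemma exists_axisForm_eq_zero_of_apply_one_zero_ne_zero (hr : g 1 0 ≠ 0)
    (hg : 2 < |g.val.trace|) : ∃ z : ℍ, axisForm g z = 0 := by
  have hdet : g 0 0 * g 1 1 - g 0 1 * g 1 0 = 1 := by rw [← det_fin_two, g.det_coe]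
  have hdisc : 0 < (g 0 0 + g 1 1) ^ 2 - 4 := by
    rw [← trace_fin_two, ← sq_abs]
    nlinarith
  have him : 0 < √((g 0 0 + g 1 1) ^ 2 - 4) / (2 * |g 1 0|) :=
    div_pos (Real.sqrt_pos.2 hdisc) (by positivity)
  -- The highest point of the axis, a half-circle centred on the real line.
  refine ⟨⟨⟨(g 0 0 - g 1 1) / (2 * g 1 0), _⟩, him⟩, ?_⟩
  simp only [axisForm, UpperHalfPlane.re, UpperHalfPlane.im]
  rw [div_pow √_, Real.sq_sqrt hdisc.le, mul_pow, sq_abs]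
  field_simp
  linear_combination 4 * hdet

lemma exists_axisForm_eq_zero_of_two_lt_abs_trace (hg : 2 < |g.val.trace|) :
    ∃ z : ℍ, axisForm g z = 0 := by
  by_cases hr : g 1 0 = 0
  · refine exists_axisForm_eq_zero_of_apply_one_zero_eq_zero hr fun hdiag ↦ ?_
    have hdet : g 0 0 * g 1 1 - g 0 1 * g 1 0 = 1 := by rw [← det_fin_two, g.det_coe]
    rw [hr, hdiag, mul_zero, sub_zero, ← sq] at hdet
    rw [trace_fin_two, hdiag, ← two_mul, abs_mul, abs_two] at hg
    exact ((one_lt_sq_iff_one_lt_abs _).2 (by linarith)).ne' hdet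
  · exact exists_axisForm_eq_zero_of_apply_one_zero_ne_zero hr hg

theorem isLeast_range_dist_smul (hg : 2 < |g.val.trace|) :
    IsLeast (Set.range fun z : ℍ ↦ dist z (g • z)) (2 * Real.arcosh (|g.val.trace| / 2)) := by
  constructor
  · obtain ⟨z, hz⟩ := exists_axisForm_eq_zero_of_two_lt_abs_trace hg
    refine ⟨z, ?_⟩
    dsimp only
    rw [← cosh_half_dist_smul_of_axisForm_eq_zero hz, Real.arcosh_cosh (by positivity),
      mul_div_cancel₀ _ two_ne_zero]
  · rintro _ ⟨z, rfl⟩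
    have hle := (Real.arcosh_le_arcosh (by linarith) (Real.cosh_pos _)).2
      (abs_trace_div_two_le_cosh_half_dist_smul g z)
    rw [Real.arcosh_cosh (by positivity)] at hle
    linarith

theorem iInf_dist_smul_eq_two_mul_arcosh (hg : 2 < |g.val.trace|) :
    ⨅ z : ℍ, dist z (g • z) = 2 * Real.arcosh (|g.val.trace| / 2) :=
  (isLeast_range_dist_smul hg).csInf_eq

end Displacement

lemma trace_inv_mul_of_coe_eq_unipotent {R : Type*} [CommRing R]
    {A : SpecialLinearGroup (Fin 2) R} {m : R}
    (hA : A.val = !![1, m; 0, 1]) (B : SpecialLinearGroup (Fin 2) R) :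
    (A⁻¹ * B).val.trace = B.val.trace - m * B 1 0 := by
  simp [hA, adjugate_fin_two_of, trace_fin_two, vecMul_eq_sum]
  ring

lemma arccosh_eq_arcosh (x : ℝ) : arccosh x = Real.arcosh x := rfl

theorem stmt_11_general (m₁ m₂ a b d : ℝ)
    (Γ : Subgroup (Matrix.SpecialLinearGroup (Fin 2) ℝ))
    (A B : Matrix.SpecialLinearGroup (Fin 2) ℝ)
    (hA : (A : Matrix (Fin 2) (Fin 2) ℝ) = !![1, m₁; 0, 1])
    (hB : (B : Matrix (Fin 2) (Fin 2) ℝ) = !![a, b; m₂, d])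
    (htr : 2 < |a + d - m₁ * m₂|)
    (hAΓ : A ∈ Γ) (hBΓ : B ∈ Γ) :
    ∃ γ ∈ Γ,
      2 < |Matrix.trace (γ : Matrix (Fin 2) (Fin 2) ℝ)| ∧
      |Matrix.trace (γ : Matrix (Fin 2) (Fin 2) ℝ)| = |a + d - m₁ * m₂| ∧
      Real.cosh ((⨅ z : UpperHalfPlane, dist z (γ • z)) / 2) = |a + d - m₁ * m₂| / 2 ∧
      (⨅ z : UpperHalfPlane, dist z (γ • z)) = 2 * arccosh (|a + d - m₁ * m₂| / 2) := by
  have htrace : (A⁻¹ * B).val.trace = a + d - m₁ * m₂ := by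
    rw [trace_inv_mul_of_coe_eq_unipotent hA, hB, trace_fin_two_of]
    rfl
  rw [← htrace] at htr ⊢
  have hlength := iInf_dist_smul_eq_two_mul_arcosh htr
  rw [← arccosh_eq_arcosh] at hlength
  refine ⟨A⁻¹ * B, Γ.mul_mem (Γ.inv_mem hAΓ) hBΓ, htr, rfl, ?_, hlength⟩
  rw [hlength, mul_div_cancel_left₀ _ two_ne_zero, arccosh_eq_arcosh,
    Real.cosh_arcosh (by linarith)]

/-- If a subgroup Γ of SL(2,ℝ) contains the parabolic matrix
!![1, m₁; 0, 1] and a matrix !![a, b; m₂, d] of determinant 1 with a + d = 2, and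
D := m₁·m₂ > 4, then Γ contains a hyperbolic element γ with |tr γ| = D - 2 whose
translation length ℓ = inf_z dist(z, γ·z) satisfies cosh(ℓ/2) = (D-2)/2; equivalently
ℓ = 2·arccosh((D-2)/2). -/
theorem stmt_11 (m₁ m₂ a b d : ℝ)
    (Γ : Subgroup (Matrix.SpecialLinearGroup (Fin 2) ℝ))
    (A B : Matrix.SpecialLinearGroup (Fin 2) ℝ)
    (hA : (A : Matrix (Fin 2) (Fin 2) ℝ) = !![1, m₁; 0, 1])
    (hB : (B : Matrix (Fin 2) (Fin 2) ℝ) = !![a, b; m₂, d])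
    (hdet : a * d - b * m₂ = 1)
    (htr : a + d = 2)
    (hD : 4 < m₁ * m₂)
    (hAΓ : A ∈ Γ) (hBΓ : B ∈ Γ) :
    ∃ γ ∈ Γ,
      2 < |Matrix.trace ((γ : Matrix.SpecialLinearGroup (Fin 2) ℝ) :
        Matrix (Fin 2) (Fin 2) ℝ)| ∧
      |Matrix.trace ((γ : Matrix.SpecialLinearGroup (Fin 2) ℝ) :
        Matrix (Fin 2) (Fin 2) ℝ)| = m₁ * m₂ - 2 ∧
      Real.cosh ((⨅ z : UpperHalfPlane, dist z (γ • z)) / 2) = (m₁ * m₂ - 2) / 2 ∧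
      (⨅ z : UpperHalfPlane, dist z (γ • z)) = 2 * arccosh ((m₁ * m₂ - 2) / 2) := by
  have habs : |a + d - m₁ * m₂| = m₁ * m₂ - 2 := by
    rw [htr, abs_of_neg (by linarith), neg_sub]
  rw [← habs]
  exact stmt_11_general m₁ m₂ a b d Γ A B hA hB (by linarith) hAΓ hBΓ
end
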